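/- The credit passing cost model (⇓ᶜ, Φᶜ, ⌊·⌋ᶜ) is sound: whenever Γ : e ⇓ᶜ_n Δ : v, there exists k with ⌊Γ⌋ᶜ : e ⇓ᴿ_k ⌊Δ⌋ᶜ : v and k + Φᶜ(Δ) − Φᶜ(Γ) ≤ n. -/

import Mathlib

/-! ## Syntax of the fine-grain call-by-value lambda calculus with thunks -/

mutual
inductive Val : Type where
  | var : String → Val
  | ptr : Nat → Val
  | unit : Val
  | inl : Val → Val
  | inr : Val → Val
  | pair : Val → Val → Val
  | lam : String → Expr → Val

inductive HeapVal : Type where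
  | fold : Val → HeapVal
  | memo : Val → HeapVal
  | lazy : String → Val → HeapVal

inductive Expr : Type where
  | ret : Val → Expr
  | alloc : HeapVal → Expr
  | letE : String → Expr → Expr → Expr
  | caseE : Val → String → Expr → String → Expr → Expr
  | splitE : Val → String → String → Expr → Expr
  | app : Val → Val → Expr
  | unfoldE : Val → Expr
  | call : String → Val → Expr
  | force : Val → Expr
  | save : Nat → Val → Expr
  | spend : Nat → Val → Expr → Expr
  | pass : Val → Expr
end

/-! ## Capture-avoiding substitution (values substituted are closed) -/

mutual
def substV (v : Val) (x : String) : Val → Val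
  | .var y => if y = x then v else .var y
  | .ptr a => .ptr a
  | .unit => .unit
  | .inl w => .inl (substV v x w)
  | .inr w => .inr (substV v x w)
  | .pair w₁ w₂ => .pair (substV v x w₁) (substV v x w₂)
  | .lam y e => if y = x then .lam y e else .lam y (substE v x e)

def substH (v : Val) (x : String) : HeapVal → HeapVal
  | .fold w => .fold (substV v x w)
  | .memo w => .memo (substV v x w)
  | .lazy F w => .lazy F (substV v x w)

def substE (v : Val) (x : String) : Expr → Expr
  | .ret w => .ret (substV v x w)
  | .alloc hv => .alloc (substH v x hv)
  | .letE y e₁ e₂ => .letE y (substE v x e₁) (if y = x then e₂ else substE v x e₂)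
  | .caseE w y₁ e₁ y₂ e₂ =>
      .caseE (substV v x w) y₁ (if y₁ = x then e₁ else substE v x e₁)
        y₂ (if y₂ = x then e₂ else substE v x e₂)
  | .splitE w y₁ y₂ e =>
      .splitE (substV v x w) y₁ y₂ (if y₁ = x ∨ y₂ = x then e else substE v x e)
  | .app w₁ w₂ => .app (substV v x w₁) (substV v x w₂)
  | .unfoldE w => .unfoldE (substV v x w)
  | .call F w => .call F (substV v x w)
  | .force w => .force (substV v x w)
  | .save n w => .save n (substV v x w)
  | .spend n w e => .spend n (substV v x w) (substE v x e)
  | .pass w => .pass (substV v x w)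
end

/-! ## Heaps: finite partial maps from pointers to (annotated) heap values -/

structure Heap (A : Type) : Type where
  look : Nat → Option A
  fin : {a : Nat | look a ≠ none}.Finite

namespace Heap

def empty {A : Type} : Heap A := ⟨fun _ => none, by simp⟩

def upd {A : Type} (Γ : Heap A) (a : Nat) (v : A) : Heap A :=
  ⟨fun b => if b = a then some v else Γ.look b, by
    apply Set.Finite.subset (Γ.fin.insert a)
    intro b hb
    simp only [Set.mem_setOf_eq] at hb
    by_cases h : b = a
    · simp [h]
    · simp only [h, if_false] at hb
      exact Set.mem_insert_iff.mpr (Or.inr hb)⟩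

def erase {A : Type} (Γ : Heap A) (a : Nat) : Heap A :=
  ⟨fun b => if b = a then none else Γ.look b, by
    apply Set.Finite.subset Γ.fin
    intro b hb
    simp only [Set.mem_setOf_eq] at hb ⊢
    by_cases h : b = a
    · simp [h] at hb
    · simpa [h] using hb⟩

def eraseSet {A : Type} (Γ : Heap A) (D : Finset Nat) : Heap A :=
  ⟨fun b => if b ∈ D then none else Γ.look b, by
    apply Set.Finite.subset Γ.fin
    intro b hb
    simp only [Set.mem_setOf_eq] at hb ⊢
    by_cases h : b ∈ D
    · simp [h] at hb
    · simpa [h] using hb⟩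

def map {A B : Type} (Γ : Heap A) (f : A → B) : Heap B :=
  ⟨fun b => (Γ.look b).map f, by
    apply Set.Finite.subset Γ.fin
    intro b hb
    simp only [Set.mem_setOf_eq] at hb ⊢
    intro h
    rw [h] at hb
    simp at hb⟩

noncomputable def dom {A : Type} (Γ : Heap A) : Finset Nat := Γ.fin.toFinset

/-- Sum a numeric annotation over all cells of the heap. -/
noncomputable def total {A : Type} (Γ : Heap A) (f : A → ℕ) : ℕ :=
  ∑ a ∈ Γ.dom, (Γ.look a).elim 0 f

end Heap

/-! ## The real cost semantics ⇓ᴿ -/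

/-- Environment of top-level (possibly recursive) function definitions. -/
abbrev FEnv := String → Option (String × Expr)

abbrev RHeap := Heap HeapVal

/-- Big-step real semantics `Γ : e ⇓ᴿ_k Δ : v`.  Lambda applications and
function calls cost one step; `save`, `spend` and `pass` are no-ops. -/
inductive RBig (𝓕 : FEnv) : RHeap → Expr → Nat → RHeap → Val → Prop where
  | ret : ∀ Γ v, RBig 𝓕 Γ (.ret v) 0 Γ v
  | alloc : ∀ Γ a hv, Γ.look a = none →
      RBig 𝓕 Γ (.alloc hv) 0 (Γ.upd a hv) (.ptr a)
  | letE : ∀ Γ Δ Θ x e₁ e₂ k l v w,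
      RBig 𝓕 Γ e₁ k Δ v → RBig 𝓕 Δ (substE v x e₂) l Θ w →
      RBig 𝓕 Γ (.letE x e₁ e₂) (k + l) Θ w
  | caseL : ∀ Γ Δ v x₁ e₁ x₂ e₂ k w,
      RBig 𝓕 Γ (substE v x₁ e₁) k Δ w →
      RBig 𝓕 Γ (.caseE (.inl v) x₁ e₁ x₂ e₂) k Δ w
  | caseR : ∀ Γ Δ v x₁ e₁ x₂ e₂ k w,
      RBig 𝓕 Γ (substE v x₂ e₂) k Δ w →
      RBig 𝓕 Γ (.caseE (.inr v) x₁ e₁ x₂ e₂) k Δ w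
  | splitE : ∀ Γ Δ v₁ v₂ x y e k w,
      RBig 𝓕 Γ (substE v₂ y (substE v₁ x e)) k Δ w →
      RBig 𝓕 Γ (.splitE (.pair v₁ v₂) x y e) k Δ w
  | app : ∀ Γ Δ x e v k w,
      RBig 𝓕 Γ (substE v x e) k Δ w →
      RBig 𝓕 Γ (.app (.lam x e) v) (k + 1) Δ w
  | unfoldE : ∀ Γ a v, Γ.look a = some (.fold v) →
      RBig 𝓕 Γ (.unfoldE (.ptr a)) 0 Γ v
  | call : ∀ Γ Δ F x e v k w, 𝓕 F = some (x, e) →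
      RBig 𝓕 Γ (substE v x e) k Δ w →
      RBig 𝓕 Γ (.call F v) (k + 1) Δ w
  | force : ∀ Γ Δ a F v k w, Γ.look a = some (.lazy F v) →
      RBig 𝓕 (Γ.erase a) (.call F v) k Δ w →
      RBig 𝓕 Γ (.force (.ptr a)) k (Δ.upd a (.memo w)) w
  | recall : ∀ Γ a v, Γ.look a = some (.memo v) →
      RBig 𝓕 Γ (.force (.ptr a)) 0 Γ v
  | save : ∀ Γ m v, RBig 𝓕 Γ (.save m v) 0 Γ v
  | spend : ∀ Γ Δ m v e k w, RBig 𝓕 Γ e k Δ w →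
      RBig 𝓕 Γ (.spend m v e) k Δ w
  | pass : ∀ Γ v, RBig 𝓕 Γ (.pass v) 0 Γ v

/-! ## Credit passing style ⇓ᶜ : credits only on lazy thunks -/

/-- Heap values of the credit passing model: credit annotations
are only allowed on lazy thunks. -/
inductive CHV : Type where
  | fold : Val → CHV
  | memo : Val → CHV
  | lazy : ℕ → String → Val → CHV

abbrev CHeap := Heap CHV

/-- Allocation in the credit passing model: lazy thunks start with 0 credits. -/
def toCHV : HeapVal → CHV
  | .fold v => .fold v
  | .memo v => .memo v
  | .lazy F v => .lazy 0 F v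

/-- Big-step credit passing semantics `Γ : e ⇓ᶜ_k Δ : v`. -/
inductive CBig (𝓕 : FEnv) : CHeap → Expr → Nat → CHeap → Val → Prop where
  | ret : ∀ Γ v, CBig 𝓕 Γ (.ret v) 0 Γ v
  | alloc : ∀ Γ a hv, Γ.look a = none →
      CBig 𝓕 Γ (.alloc hv) 0 (Γ.upd a (toCHV hv)) (.ptr a)
  | letE : ∀ Γ Δ Θ x e₁ e₂ k l v w,
      CBig 𝓕 Γ e₁ k Δ v → CBig 𝓕 Δ (substE v x e₂) l Θ w →
      CBig 𝓕 Γ (.letE x e₁ e₂) (k + l) Θ w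
  | caseL : ∀ Γ Δ v x₁ e₁ x₂ e₂ k w,
      CBig 𝓕 Γ (substE v x₁ e₁) k Δ w →
      CBig 𝓕 Γ (.caseE (.inl v) x₁ e₁ x₂ e₂) k Δ w
  | caseR : ∀ Γ Δ v x₁ e₁ x₂ e₂ k w,
      CBig 𝓕 Γ (substE v x₂ e₂) k Δ w →
      CBig 𝓕 Γ (.caseE (.inr v) x₁ e₁ x₂ e₂) k Δ w
  | splitE : ∀ Γ Δ v₁ v₂ x y e k w,
      CBig 𝓕 Γ (substE v₂ y (substE v₁ x e)) k Δ w →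
      CBig 𝓕 Γ (.splitE (.pair v₁ v₂) x y e) k Δ w
  | app : ∀ Γ Δ x e v k w,
      CBig 𝓕 Γ (substE v x e) k Δ w →
      CBig 𝓕 Γ (.app (.lam x e) v) (k + 1) Δ w
  | unfoldE : ∀ Γ a v, Γ.look a = some (.fold v) →
      CBig 𝓕 Γ (.unfoldE (.ptr a)) 0 Γ v
  | call : ∀ Γ Δ F x e v k w, 𝓕 F = some (x, e) →
      CBig 𝓕 Γ (substE v x e) k Δ w →
      CBig 𝓕 Γ (.call F v) (k + 1) Δ w
  | save : ∀ Γ a n F v m, Γ.look a = some (.lazy n F v) →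
      CBig 𝓕 Γ (.save m (.ptr a)) m (Γ.upd a (.lazy (n + m) F v)) (.ptr a)
  | waste : ∀ Γ a v m, Γ.look a = some (.memo v) →
      CBig 𝓕 Γ (.save m (.ptr a)) m Γ (.ptr a)
  | force : ∀ Γ Δ a n F v k w, Γ.look a = some (.lazy n F v) →
      CBig 𝓕 (Γ.erase a) (.call F v) k Δ w → k ≤ n →
      CBig 𝓕 Γ (.force (.ptr a)) 0 (Δ.upd a (.memo w)) w
  | recall : ∀ Γ a v, Γ.look a = some (.memo v) →
      CBig 𝓕 Γ (.force (.ptr a)) 0 Γ v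

/-- The potential Φᶜ: the total number of credits on lazy thunks. -/
noncomputable def ΦC (Γ : CHeap) : ℕ :=
  Γ.total (fun hv => match hv with | .lazy n _ _ => n | _ => 0)

/-- The erasure ⌊·⌋ᶜ: drop the credit annotations. -/
def stripC (Γ : CHeap) : RHeap :=
  Γ.map (fun hv => match hv with
    | .fold v => .fold v
    | .memo v => .memo v
    | .lazy _ F v => .lazy F v)

/-! The proof is the potential method. Define the amortized cost of a real evaluation as its number
of steps plus the change of `Φᶜ`; by rule induction it is bounded by the cost charged by `⇓ᶜ`.
Real evaluation of a `force` takes the steps of the thunk body, for which `⇓ᶜ` charges nothing.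
They are paid for by the credits `n` of the thunk: its body runs in a heap whose potential is lower
by `n`, and was required to cost at most `n`. -/

namespace Heap

variable {A B : Type}

@[ext]
theorem ext {Γ Δ : Heap A} (h : ∀ a, Γ.look a = Δ.look a) : Γ = Δ := by
  cases Γ
  cases Δ
  rw [Heap.mk.injEq]
  exact funext h

theorem look_upd (Γ : Heap A) (a b : ℕ) (x : A) :
    (Γ.upd a x).look b = if b = a then some x else Γ.look b := rfl

theorem look_erase (Γ : Heap A) (a b : ℕ) :
    (Γ.erase a).look b = if b = a then none else Γ.look b := rfl

theorem look_map (Γ : Heap A) (f : A → B) (a : ℕ) : (Γ.map f).look a = (Γ.look a).map f := rfl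

theorem mem_dom {Γ : Heap A} {a : ℕ} : a ∈ Γ.dom ↔ Γ.look a ≠ none := by
  simp [dom]

theorem upd_eq_self {Γ : Heap A} {a : ℕ} {x : A} (h : Γ.look a = some x) : Γ.upd a x = Γ := by
  ext1 b
  rw [look_upd]
  split_ifs with hb
  · rw [hb, h]
  · rfl

theorem erase_eq_self {Γ : Heap A} {a : ℕ} (h : Γ.look a = none) : Γ.erase a = Γ := by
  ext1 b
  rw [look_erase]
  split_ifs with hb
  · rw [hb, h]
  · rfl

theorem erase_upd (Γ : Heap A) (a : ℕ) (x : A) : (Γ.upd a x).erase a = Γ.erase a := by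
  ext1 b
  simp only [look_erase, look_upd]
  split_ifs <;> rfl

theorem map_upd (Γ : Heap A) (f : A → B) (a : ℕ) (x : A) :
    (Γ.upd a x).map f = (Γ.map f).upd a (f x) := by
  ext1 b
  simp only [look_map, look_upd]
  split_ifs <;> rfl

theorem map_erase (Γ : Heap A) (f : A → B) (a : ℕ) : (Γ.erase a).map f = (Γ.map f).erase a := by
  ext1 b
  simp only [look_map, look_erase]
  split_ifs <;> rfl

theorem dom_erase (Γ : Heap A) (a : ℕ) : (Γ.erase a).dom = Γ.dom.erase a := by
  ext b
  simp only [mem_dom, look_erase, Finset.mem_erase]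
  split_ifs with hb <;> simp [hb]

theorem total_eq_add_total_erase {Γ : Heap A} {a : ℕ} {x : A} (f : A → ℕ)
    (h : Γ.look a = some x) : Γ.total f = f x + (Γ.erase a).total f := by
  have ha : a ∈ Γ.dom := mem_dom.2 (by simp [h])
  have hrest : (Γ.erase a).total f = ∑ b ∈ Γ.dom.erase a, (Γ.look b).elim 0 f := by
    rw [total, dom_erase]
    refine Finset.sum_congr rfl fun b hb => ?_
    rw [look_erase, if_neg (Finset.ne_of_mem_erase hb)]
  rw [hrest, total, ← Finset.add_sum_erase _ _ ha, h, Option.elim_some]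

theorem total_upd (Γ : Heap A) (f : A → ℕ) (a : ℕ) (x : A) :
    (Γ.upd a x).total f = f x + (Γ.erase a).total f := by
  rw [total_eq_add_total_erase f (a := a) (x := x) (by simp [look_upd]), erase_upd]

theorem total_erase_le (Γ : Heap A) (f : A → ℕ) (a : ℕ) : (Γ.erase a).total f ≤ Γ.total f := by
  cases h : Γ.look a with
  | none => rw [erase_eq_self h]
  | some x =>
    rw [total_eq_add_total_erase f h]
    exact Nat.le_add_left _ _

end Heap

namespace CHV

/-- The credits stored on a single heap cell: the summand of the potential `ΦC`. -/
def credits : CHV → ℕ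
  | .lazy n _ _ => n
  | _ => 0

/-- The heap value underlying an annotated one: the cellwise part of the erasure `stripC`. -/
def strip : CHV → HeapVal
  | .fold v => .fold v
  | .memo v => .memo v
  | .lazy _ F v => .lazy F v

theorem credits_toCHV (hv : HeapVal) : (toCHV hv).credits = 0 := by
  cases hv <;> rfl

theorem strip_toCHV (hv : HeapVal) : (toCHV hv).strip = hv := by
  cases hv <;> rfl

end CHV

theorem stripC_eq_map (Γ : CHeap) : stripC Γ = Γ.map CHV.strip := rfl

theorem look_stripC {Γ : CHeap} {a : ℕ} {c : CHV} (h : Γ.look a = some c) :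
    (stripC Γ).look a = some c.strip := by
  rw [stripC_eq_map, Heap.look_map, h, Option.map_some]

theorem stripC_upd (Γ : CHeap) (a : ℕ) (c : CHV) :
    stripC (Γ.upd a c) = (stripC Γ).upd a c.strip :=
  Γ.map_upd CHV.strip a c

theorem stripC_erase (Γ : CHeap) (a : ℕ) : stripC (Γ.erase a) = (stripC Γ).erase a :=
  Γ.map_erase CHV.strip a

theorem ΦC_upd (Γ : CHeap) (a : ℕ) (c : CHV) :
    ΦC (Γ.upd a c) = c.credits + ΦC (Γ.erase a) :=
  Γ.total_upd CHV.credits a c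

theorem ΦC_eq_add_ΦC_erase {Γ : CHeap} {a : ℕ} {c : CHV} (h : Γ.look a = some c) :
    ΦC Γ = c.credits + ΦC (Γ.erase a) :=
  Heap.total_eq_add_total_erase CHV.credits h

/-- Evaluation of `e` from `Γ` to `Δ` with result `v` has amortized cost at most `n` for the
potential `ΦC`. The inequality `k + (ΦC Δ - ΦC Γ) ≤ n` is stated without subtraction so that it
lives in `ℕ`. -/
def AmortizedEval (𝓕 : FEnv) (Γ : CHeap) (e : Expr) (n : ℕ) (Δ : CHeap) (v : Val) : Prop :=
  ∃ k, RBig 𝓕 (stripC Γ) e k (stripC Δ) v ∧ k + ΦC Δ ≤ n + ΦC Γ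

namespace AmortizedEval

variable {𝓕 : FEnv} {Γ Δ Θ : CHeap} {a m n : ℕ} {v w : Val}

theorem of_zero_steps {e : Expr} (n : ℕ) (h : RBig 𝓕 (stripC Γ) e 0 (stripC Γ) v) :
    AmortizedEval 𝓕 Γ e n Γ v :=
  ⟨0, h, by omega⟩

theorem add_steps {e e' : Expr} (c : ℕ) (h : AmortizedEval 𝓕 Γ e n Δ v)
    (hstep : ∀ k, RBig 𝓕 (stripC Γ) e k (stripC Δ) v →
      RBig 𝓕 (stripC Γ) e' (k + c) (stripC Δ) v) :
    AmortizedEval 𝓕 Γ e' (n + c) Δ v := by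
  obtain ⟨k, hk, hle⟩ := h
  exact ⟨k + c, hstep k hk, by omega⟩

theorem letE {x : String} {e₁ e₂ : Expr} (h₁ : AmortizedEval 𝓕 Γ e₁ m Δ v)
    (h₂ : AmortizedEval 𝓕 Δ (substE v x e₂) n Θ w) :
    AmortizedEval 𝓕 Γ (.letE x e₁ e₂) (m + n) Θ w := by
  obtain ⟨k, hk, hle₁⟩ := h₁
  obtain ⟨l, hl, hle₂⟩ := h₂
  exact ⟨k + l, .letE _ _ _ _ _ _ _ _ _ _ hk hl, by omega⟩

theorem alloc (hv : HeapVal) (h : Γ.look a = none) :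
    AmortizedEval 𝓕 Γ (.alloc hv) 0 (Γ.upd a (toCHV hv)) (.ptr a) := by
  refine ⟨0, ?_, ?_⟩
  · have hnone : (stripC Γ).look a = none := by
      rw [stripC_eq_map, Heap.look_map, h, Option.map_none]
    rw [stripC_upd, CHV.strip_toCHV]
    exact .alloc _ _ _ hnone
  · rw [ΦC_upd, CHV.credits_toCHV, Heap.erase_eq_self h]
    omega

theorem save {F : String} (m : ℕ) (h : Γ.look a = some (.lazy n F v)) :
    AmortizedEval 𝓕 Γ (.save m (.ptr a)) m (Γ.upd a (.lazy (n + m) F v)) (.ptr a) := by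
  refine ⟨0, ?_, ?_⟩
  · have hstrip : stripC (Γ.upd a (.lazy (n + m) F v)) = stripC Γ := by
      have hlook : (stripC Γ).look a = some (.lazy F v) := look_stripC h
      rw [stripC_upd]
      exact Heap.upd_eq_self hlook
    rw [hstrip]
    exact .save _ _ _
  · rw [ΦC_upd, ΦC_eq_add_ΦC_erase h]
    simp only [CHV.credits]
    omega

theorem force {F : String} (h : Γ.look a = some (.lazy n F v))
    (hbody : AmortizedEval 𝓕 (Γ.erase a) (.call F v) m Δ w) (hmn : m ≤ n) :
    AmortizedEval 𝓕 Γ (.force (.ptr a)) 0 (Δ.upd a (.memo w)) w := by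
  obtain ⟨k, hk, hle⟩ := hbody
  refine ⟨k, ?_, ?_⟩
  · rw [stripC_erase] at hk
    rw [stripC_upd]
    exact .force _ _ _ _ _ _ _ (look_stripC h) hk
  · calc
      k + ΦC (Δ.upd a (.memo w)) = k + ΦC (Δ.erase a) := by
        simp only [ΦC_upd, CHV.credits, zero_add]
      _ ≤ k + ΦC Δ := Nat.add_le_add_left (Δ.total_erase_le CHV.credits a) k
      _ ≤ m + ΦC (Γ.erase a) := hle
      _ ≤ n + ΦC (Γ.erase a) := Nat.add_le_add_right hmn _
      _ = 0 + ΦC Γ := by rw [zero_add, ΦC_eq_add_ΦC_erase h, CHV.credits]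

end AmortizedEval

/-- **Soundness of the credit passing cost model** (Lemma
`credit-passing-sound`): whenever `Γ : e ⇓ᶜ_n Δ : v`, there exists `k` with
`⌊Γ⌋ᶜ : e ⇓ᴿ_k ⌊Δ⌋ᶜ : v` and `k + Φᶜ(Δ) − Φᶜ(Γ) ≤ n`. -/
theorem credit_passing_sound (𝓕 : FEnv) (Γ Δ : CHeap) (e : Expr) (n : ℕ) (v : Val)
    (h : CBig 𝓕 Γ e n Δ v) :
    ∃ k : ℕ, RBig 𝓕 (stripC Γ) e k (stripC Δ) v ∧
      (k : ℤ) + (ΦC Δ : ℤ) - (ΦC Γ : ℤ) ≤ (n : ℤ) := by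
  suffices hsound : AmortizedEval 𝓕 Γ e n Δ v by
    obtain ⟨k, hk, hle⟩ := hsound
    exact ⟨k, hk, by omega⟩
  induction h with
  | ret => exact .of_zero_steps 0 (.ret ..)
  | alloc _ _ hv ha => exact .alloc hv ha
  | letE _ _ _ _ _ _ _ _ _ _ _ _ ih₁ ih₂ => exact ih₁.letE ih₂
  | caseL _ _ _ _ _ _ _ _ _ _ ih => exact ih.add_steps 0 fun _ => .caseL _ _ _ _ _ _ _ _ _
  | caseR _ _ _ _ _ _ _ _ _ _ ih => exact ih.add_steps 0 fun _ => .caseR _ _ _ _ _ _ _ _ _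
  | splitE _ _ _ _ _ _ _ _ _ _ ih => exact ih.add_steps 0 fun _ => .splitE _ _ _ _ _ _ _ _ _
  | app _ _ _ _ _ _ _ _ ih => exact ih.add_steps 1 fun _ => .app _ _ _ _ _ _ _
  | unfoldE _ _ _ ha => exact .of_zero_steps 0 (.unfoldE _ _ _ (look_stripC ha))
  | call _ _ _ _ _ _ _ _ hF _ ih => exact ih.add_steps 1 fun _ => .call _ _ _ _ _ _ _ _ hF
  | save _ _ _ _ _ m ha => exact .save m ha
  | waste _ _ _ m _ => exact .of_zero_steps m (.save ..)
  | force _ _ _ _ _ _ _ _ ha _ hkn ih => exact .force ha ih hkn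
  -- the rule `recall`, whose name is a reserved word and so cannot label an alternative
  | _ =>
    rename_i ha
    exact .of_zero_steps 0 (RBig.recall _ _ _ (look_stripC ha))
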